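/- Let n ≥ m ≥ 1 and d = n + 1 - ⌊(n+1)/(m+1)⌋ - ⌈(n+1)/(m+1)⌉. Then for all 0 ≤ k ≤ d+1, ∑_{j=0}^{k} (-1)^{k-j} · binom(d+1-j, k-j) · C(n-j+1, m; j) ≤ binom(n-d+k-2, k), where C(N, m; j) is the coefficient of x^j in (1+x+⋯+x^{m-1})^N. -/

import Mathlib

/-- Coefficient of `x^j` in `(1 + x + ⋯ + x^(m-1))^N`, zero if `N < 0` or `j < 0`. -/
noncomputable def eulerCoeff (N : ℤ) (m : ℕ) (j : ℤ) : ℤ :=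
  if 0 ≤ N ∧ 0 ≤ j then
    (((∑ i ∈ Finset.range m, (Polynomial.X : Polynomial ℤ) ^ i)) ^ N.toNat).coeff j.toNat
  else 0

open Polynomial in
/-- f-polynomial of subsets of a path on `n` vertices without `m` consecutive vertices, whose
initial run has length `< b`. -/
noncomputable def runPoly (m : ℕ) : ℕ → ℕ → Polynomial ℤ
  | _, 0 => 0
  | 0, _ + 1 => 1
  | n + 1, b + 1 => runPoly m n m + X * runPoly m n b

open Polynomial in
/-- Polynomials with a combinatorial Stanley decomposition of depth at least `D`. -/
noncomputable def stanley (D : ℕ) : AddSubmonoid (Polynomial ℤ) :=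
  AddSubmonoid.closure {f | ∃ a c : ℕ, D ≤ a + c ∧ f = X ^ a * (1 + X) ^ c}

section aux
open Polynomial

lemma stanley_gen {D a c : ℕ} (h : D ≤ a + c) :
    (X ^ a * (1 + X) ^ c : ℤ[X]) ∈ stanley D :=
  AddSubmonoid.subset_closure ⟨a, c, h, rfl⟩

lemma stanley_mul {D E i j : ℕ} (h : E ≤ i + j + D) {f : ℤ[X]} (hf : f ∈ stanley D) :
    X ^ i * (1 + X) ^ j * f ∈ stanley E := by
  unfold stanley at hf
  induction hf using AddSubmonoid.closure_induction with
  | mem x hx =>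
    obtain ⟨a, c, hac, rfl⟩ := hx
    have := stanley_gen (D := E) (a := i + a) (c := j + c) (by omega)
    convert this using 1
    ring
  | zero => simp [zero_mem]
  | add x y _ _ hx hy => rw [mul_add]; exact add_mem hx hy

lemma rp_zero (m n : ℕ) : runPoly m n 0 = 0 := by cases n <;> simp [runPoly]

lemma rp_succ (m n b : ℕ) :
    runPoly m (n + 1) (b + 1) = runPoly m n m + X * runPoly m n b := by simp [runPoly]

lemma rp_small (m : ℕ) : ∀ n b, n < b → b ≤ m → runPoly m n b = (1 + X) ^ n := by
  intro n
  induction n with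
  | zero => intro b hb _; obtain ⟨b, rfl⟩ := Nat.exists_eq_add_of_lt hb; simp [runPoly]
  | succ n ih =>
    intro b hb hm
    obtain ⟨b, rfl⟩ : ∃ c, b = c + 1 := ⟨b - 1, by omega⟩
    rw [rp_succ, ih m (by omega) le_rfl, ih b (by omega) (by omega)]
    ring

lemma rp_diag (m : ℕ) : ∀ b, b ≤ m → runPoly m b b = (1 + X) ^ b - X ^ b := by
  intro b
  induction b with
  | zero => intro _; simp [runPoly]
  | succ n ih =>
    intro hm
    rw [rp_succ, rp_small m n m (by omega) le_rfl, ih (by omega)]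
    ring

lemma rp_diff (m N : ℕ) : ∀ b, runPoly m (N + b + 1) (b + 1) - runPoly m (N + b + 1) b
    = X ^ b * runPoly m N m := by
  intro b
  induction b with
  | zero => simp [rp_zero, rp_succ]
  | succ b ih =>
    rw [rp_succ, rp_succ, pow_succ', mul_assoc, ← ih, ← add_assoc]
    ring

lemma geom_one (v : ℕ) :
    ∑ i ∈ Finset.range v, (X : ℤ[X]) ^ i * (1 + X) ^ (v - 1 - i) + X ^ v = (1 + X) ^ v := by
  have h := (Commute.all (X : ℤ[X]) (1 + X)).geom_sum₂_mul v
  have h2 : (X : ℤ[X]) - (1 + X) = -1 := by ring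
  rw [h2] at h
  linear_combination -h

lemma rp_split (m : ℕ) : ∀ v N b, v ≤ b → b ≤ m → runPoly m (N + v) b =
    ∑ i ∈ Finset.range v, X ^ i * (1 + X) ^ (v - 1 - i) * runPoly m N (m - i)
      + X ^ v * runPoly m N (b - v) := by
  intro v
  induction v with
  | zero => intro N b _ _; simp
  | succ v ih =>
    intro N b hv hb
    have e : N + (v + 1) = (N + 1) + v := by ring
    rw [e, ih (N + 1) b (by omega) hb]
    have h1 : ∀ c, 1 ≤ c → runPoly m (N + 1) c = runPoly m N m + X * runPoly m N (c - 1) := by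
      intro c hc
      obtain ⟨c, rfl⟩ : ∃ d, c = d + 1 := ⟨c - 1, by omega⟩
      rw [rp_succ]; rfl
    rw [h1 (b - v) (by omega), Finset.sum_range_succ']
    have h2 : ∑ i ∈ Finset.range v, X ^ i * (1 + X) ^ (v - 1 - i) * runPoly m (N + 1) (m - i)
        = (∑ i ∈ Finset.range v, X ^ i * (1 + X) ^ (v - 1 - i)) * runPoly m N m +
          ∑ i ∈ Finset.range v,
            X ^ (i + 1) * (1 + X) ^ (v + 1 - 1 - (i + 1)) * runPoly m N (m - (i + 1)) := by
      rw [Finset.sum_mul, ← Finset.sum_add_distrib]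
      refine Finset.sum_congr rfl fun i hi => ?_
      rw [Finset.mem_range] at hi
      rw [h1 (m - i) (by omega), show v + 1 - 1 - (i + 1) = v - 1 - i by omega,
        show m - (i + 1) = m - i - 1 by omega]
      ring
    rw [h2, show b - (v + 1) = b - v - 1 by omega]
    have h3 := geom_one v
    simp only [pow_zero, Nat.sub_zero, Nat.add_sub_cancel, one_mul]
    rw [← h3]
    ring

lemma rp_stanley (m : ℕ) : ∀ n b, 1 ≤ b → b ≤ m →
    runPoly m n b ∈ stanley (n - (n / (m + 1) + (n + m + 1 - b) / (m + 1))) := by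
  intro n
  induction n using Nat.strong_induction_on with
  | _ n ih =>
    intro b hb hbm
    rcases lt_or_ge n b with h | h
    · rw [rp_small m n b h hbm]
      simpa using stanley_gen (D := n - (n / (m + 1) + (n + m + 1 - b) / (m + 1)))
        (a := 0) (c := n) (by rw [zero_add]; exact Nat.sub_le _ _)
    · obtain ⟨N, rfl⟩ : ∃ N, n = N + b := ⟨n - b, by omega⟩
      rw [rp_split m b N b le_rfl hbm]
      simp only [Nat.sub_self, rp_zero, mul_zero, add_zero]
      refine sum_mem fun i hi => ?_
      rw [Finset.mem_range] at hi
      refine stanley_mul ?_ (ih N (by omega) (m - i) (by omega) (by omega))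
      have h1 : (N + m + 1 - (m - i)) / (m + 1) ≤ (N + b) / (m + 1) :=
        Nat.div_le_div_right (by omega)
      have h2 : (N + b + m + 1 - b) / (m + 1) = N / (m + 1) + 1 := by
        rw [show N + b + m + 1 - b = N + (m + 1) by omega, Nat.add_div_right _ (by omega)]
      rw [h2]
      omega

lemma nonface_stanley (m : ℕ) (hm : 1 ≤ m) : ∀ n, m ≤ n →
    (1 + X) ^ n - runPoly m n m ∈ stanley (n + 1 - (n / (m + 1) + (n + 1) / (m + 1))) := by
  intro n hn
  induction n, hn using Nat.le_induction with
  | base =>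
    rw [rp_diag m m le_rfl]
    have h1 : (m + 1) / (m + 1) = 1 := Nat.div_self (by omega)
    have h2 : m / (m + 1) = 0 := Nat.div_eq_of_lt (by omega)
    have := stanley_gen (D := m + 1 - (m / (m + 1) + (m + 1) / (m + 1)))
        (a := m) (c := 0) (by rw [h1, h2]; omega)
    simpa using this
  | succ n hn ih =>
    obtain ⟨N, rfl⟩ : ∃ N, n = N + m := ⟨n - m, by omega⟩
    obtain ⟨μ, rfl⟩ : ∃ μ, m = μ + 1 := ⟨m - 1, by omega⟩
    have h1 := rp_diff (μ + 1) N μ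
    have h2 := rp_succ (μ + 1) (N + (μ + 1)) μ
    have key : (1 + X) ^ (N + (μ + 1) + 1) - runPoly (μ + 1) (N + (μ + 1) + 1) (μ + 1)
        = X ^ 0 * (1 + X) ^ 1 * ((1 + X) ^ (N + (μ + 1)) - runPoly (μ + 1) (N + (μ + 1)) (μ + 1))
          + X ^ (μ + 1) * (1 + X) ^ 0 * runPoly (μ + 1) N (μ + 1) := by
      rw [h2]
      rw [add_assoc] at h1
      linear_combination X * h1
    rw [key]
    refine add_mem (stanley_mul ?_ ih) (stanley_mul ?_ (rp_stanley (μ + 1) N (μ + 1) hm le_rfl))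
    · have a1 : (N + (μ + 1)) / (μ + 1 + 1) ≤ (N + (μ + 1) + 1) / (μ + 1 + 1) :=
        Nat.div_le_div_right (by omega)
      have a2 : (N + (μ + 1) + 1) / (μ + 1 + 1) ≤ (N + (μ + 1) + 1 + 1) / (μ + 1 + 1) :=
        Nat.div_le_div_right (by omega)
      omega
    · have a1 : (N + (μ + 1) + 1) / (μ + 1 + 1) = N / (μ + 1 + 1) + 1 := by
        rw [show N + (μ + 1) + 1 = N + (μ + 1 + 1) by omega, Nat.add_div_right _ (by omega)]
      have a2 : (N + (μ + 1) + 1 + 1) / (μ + 1 + 1) = (N + 1) / (μ + 1 + 1) + 1 := by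
        rw [show N + (μ + 1) + 1 + 1 = N + 1 + (μ + 1 + 1) by omega,
          Nat.add_div_right _ (by omega)]
      rw [a1, a2, show N + (μ + 1) + 1 - (μ + 1) = N + 1 by omega]
      omega

lemma rp_coeff_zero (m : ℕ) : ∀ n b j, n < j → (runPoly m n b).coeff j = 0 := by
  intro n
  induction n with
  | zero =>
    intro b j hj
    cases b with
    | zero => simp [runPoly]
    | succ b => simp [runPoly, coeff_one]; omega
  | succ n ih =>
    intro b j hj
    cases b with
    | zero => simp [runPoly]
    | succ b =>
      obtain ⟨j, rfl⟩ : ∃ d, j = d + 1 := ⟨j - 1, by omega⟩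
      rw [rp_succ, coeff_add, coeff_X_mul, ih _ _ (by omega), ih _ _ (by omega), add_zero]

lemma rp_coeff (m : ℕ) : ∀ n b j, b ≤ m → j ≤ n → (runPoly m n b).coeff j =
    ((∑ i ∈ Finset.range b, (X : ℤ[X]) ^ i) * (∑ i ∈ Finset.range m, X ^ i) ^ (n - j)).coeff j := by
  intro n
  induction n with
  | zero =>
    intro b j _ hj
    obtain rfl : j = 0 := by omega
    cases b with
    | zero => simp [runPoly]
    | succ b => simp [runPoly, Finset.sum_range_succ']
  | succ n ih =>
    intro b j hb hj
    cases b with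
    | zero => simp [runPoly]
    | succ b =>
      have hs : ∑ i ∈ Finset.range (b + 1), (X : ℤ[X]) ^ i
          = 1 + X * ∑ i ∈ Finset.range b, X ^ i := by
        rw [Finset.sum_range_succ', Finset.mul_sum, add_comm]
        simp [pow_succ']
      rw [rp_succ, hs, add_mul, one_mul, coeff_add, coeff_add, mul_assoc]
      congr 1
      · rcases Nat.lt_or_ge n j with h | h
        · obtain rfl : j = n + 1 := by omega
          rw [rp_coeff_zero m n m _ h]
          simp [coeff_one]
        · rw [ih m j le_rfl h, ← pow_succ', show n + 1 - j = n - j + 1 by omega]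
      · cases j with
        | zero => simp
        | succ j =>
          rw [coeff_X_mul, coeff_X_mul, ih b j (by omega) (by omega),
            show n + 1 - (j + 1) = n - j by omega]

lemma euler_eq (m n j : ℕ) (hj : j ≤ n) :
    eulerCoeff ((n : ℤ) - j + 1) m j = (runPoly m n m).coeff j := by
  rw [rp_coeff m n m j le_rfl hj, ← pow_succ', eulerCoeff, if_pos (by omega)]
  rw [show ((n : ℤ) - j + 1).toNat = n - j + 1 by omega, Int.toNat_natCast]

lemma choose_neg_id (E u : ℕ) (i : ℕ) (hi : i ≤ u) (hu : u ≤ E) :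
    (-1 : ℤ) ^ (u - i) * ((E - i).choose (u - i) : ℤ) = Ring.choose ((u : ℤ) - E - 1) (u - i) := by
  rw [show ((u : ℤ) - E - 1) = -((E : ℤ) + 1 - u) by ring, Ring.choose_neg,
    show (E : ℤ) + 1 - u + ((u - i : ℕ) : ℤ) - 1 = ((E - i : ℕ) : ℤ) by omega,
    Ring.choose_natCast, Int.negOnePow_def]
  simp [Units.smul_def]

/-- Alternating Chu–Vandermonde. -/
lemma vander (E u c : ℕ) (hu : u ≤ E) (hc : E ≤ c) :
    ∑ i ∈ Finset.range (u + 1), (-1 : ℤ) ^ (u - i) * ((E - i).choose (u - i) : ℤ) * (c.choose i : ℤ)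
      = ((c - E + u - 1).choose u : ℤ) := by
  have h := Ring.add_choose_eq (R := ℤ) u (Commute.all (c : ℤ) ((u : ℤ) - E - 1))
  rw [Finset.Nat.sum_antidiagonal_eq_sum_range_succ
    (fun i j => Ring.choose (c : ℤ) i * Ring.choose ((u : ℤ) - E - 1) j)] at h
  have h2 : Ring.choose ((c : ℤ) + (u - E - 1)) u = ((c - E + u - 1).choose u : ℤ) := by
    rcases Nat.eq_zero_or_pos u with rfl | hu0
    · simp
    · rw [← Ring.choose_natCast]
      congr 1
      omega
  rw [← h2, h]
  refine Finset.sum_congr rfl fun i hi => ?_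
  rw [Finset.mem_range] at hi
  rw [choose_neg_id E u i (by omega) hu, Ring.choose_natCast, mul_comm]

lemma functional_nonneg (D k : ℕ) (hk : k ≤ D) {f : ℤ[X]} (hf : f ∈ stanley D) :
    0 ≤ ∑ j ∈ Finset.range (k + 1),
        (-1 : ℤ) ^ (k - j) * ((D - j).choose (k - j) : ℤ) * f.coeff j := by
  unfold stanley at hf
  induction hf using AddSubmonoid.closure_induction with
  | mem x hx =>
    obtain ⟨a, c, hac, rfl⟩ := hx
    simp only [coeff_X_pow_mul', coeff_one_add_X_pow]
    rcases Nat.lt_or_ge k a with h | h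
    · refine le_of_eq (Finset.sum_eq_zero fun j hj => ?_).symm
      rw [Finset.mem_range] at hj
      rw [if_neg (by omega), mul_zero]
    · obtain ⟨u, rfl⟩ : ∃ u, k = a + u := ⟨k - a, by omega⟩
      rw [add_assoc, Finset.sum_range_add, Finset.sum_eq_zero, zero_add]
      · have := vander (D - a) u c (by omega) (by omega)
        refine le_of_le_of_eq (Int.natCast_nonneg ((c - (D - a) + u - 1).choose u)) ?_
        rw [← this]
        refine Finset.sum_congr rfl fun i _ => ?_
        rw [if_pos (by omega), show a + u - (a + i) = u - i by omega,
          show D - (a + i) = D - a - i by omega, show a + i - a = i by omega]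
      · intro j hj
        rw [Finset.mem_range] at hj
        rw [if_neg (by omega), mul_zero]
  | zero => simp
  | add x y _ _ hx hy =>
    simp only [coeff_add, mul_add, Finset.sum_add_distrib]
    exact add_nonneg hx hy

end aux

theorem stmt6 (n m d k : ℕ) (hm : 1 ≤ m) (hmn : m ≤ n)
    (hd : d = n + 1 - (n + 1) / (m + 1) - (n + 1 + m) / (m + 1)) (hk : k ≤ d + 1) :
    ∑ j ∈ Finset.range (k + 1),
        (-1 : ℤ) ^ (k - j) * ((d + 1 - j).choose (k - j) : ℤ) * eulerCoeff ((n : ℤ) - j + 1) m j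
      ≤ ((n - d + k - 2).choose k : ℤ) := by
  have e1 : (n + 1 + m) / (m + 1) = n / (m + 1) + 1 := by
    rw [show n + 1 + m = n + (m + 1) by omega, Nat.add_div_right _ (by omega)]
  have e2 : n / (m + 1) ≤ n / 2 := Nat.div_le_div_left (by omega) (by omega)
  have e3 : (n + 1) / (m + 1) ≤ (n + 1) / 2 := Nat.div_le_div_left (by omega) (by omega)
  have e4 : 1 ≤ (n + 1) / (m + 1) := Nat.div_pos (by omega) (by omega)
  rw [e1] at hd
  have hD : n + 1 - (n / (m + 1) + (n + 1) / (m + 1)) = d + 1 := by omega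
  have hdn : d + 1 ≤ n := by
    rw [← hD]
    generalize n / (m + 1) = x at *
    omega
  have h := nonface_stanley m hm n hmn
  rw [hD] at h
  have h2 := functional_nonneg (d + 1) k hk h
  have h3 := vander (d + 1) k n hk hdn
  rw [show n - (d + 1) + k - 1 = n - d + k - 2 by omega] at h3
  rw [← h3, ← sub_nonneg, ← Finset.sum_sub_distrib]
  refine le_of_le_of_eq h2 (Finset.sum_congr rfl fun j hj => ?_)
  rw [Finset.mem_range] at hj
  rw [euler_eq m n j (by omega), Polynomial.coeff_sub, Polynomial.coeff_one_add_X_pow, mul_sub]
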